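/- arXiv:1605.00818 — 2 statements merged into one kernel-verified Lean document; each statement's English description precedes it below -/
import Mathlib

section
/- (8, 5) ∈ HWP(C_3[13]; 3, 13); that is, the edge set of C_3[13] can be partitioned into 8 C_3-factors and 5 C_13-factors. -/
open SimpleGraph

/-- `F` is a `C_k`-factor of `H`: a spanning subgraph of `H` that is 2-regular
and each of whose connected components has exactly `k` vertices. -/
def IsCycleFactor {V : Type*} (H F : SimpleGraph V) (k : ℕ) : Prop :=
  F ≤ H ∧ (∀ v, (F.neighborSet v).ncard = 2) ∧
    ∀ v : V, {w | F.Reachable v w}.ncard = k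

/-- The family of graphs `F` partitions the edge set of `H`. -/
def IsDecomp {V ι : Type*} (H : SimpleGraph V) (F : ι → SimpleGraph V) : Prop :=
  (Pairwise fun i j => Disjoint (F i).edgeSet (F j).edgeSet) ∧
  ∀ e, e ∈ H.edgeSet ↔ ∃ i, e ∈ (F i).edgeSet

/-- `HW H m n α β`: the edge set of `H` can be partitioned into
`α` `C_m`-factors and `β` `C_n`-factors. -/
def HW {V : Type*} (H : SimpleGraph V) (m n α β : ℕ) : Prop :=
  ∃ F : Fin α ⊕ Fin β → SimpleGraph V,
    (∀ i, IsCycleFactor H (F (Sum.inl i)) m) ∧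
    (∀ j, IsCycleFactor H (F (Sum.inr j)) n) ∧
    IsDecomp H F

/-- `(α, β) ∈ HWP(v; m, n)` for odd `v`: `K_v` has a 2-factorization into
`α` `C_m`-factors and `β` `C_n`-factors. -/
def HWPodd (v m n α β : ℕ) : Prop := HW (⊤ : SimpleGraph (Fin v)) m n α β

/-- `F ≤ H` is a vertex-disjoint union of `c` cycles of length `k`:
2-regular on its support, every component has `k` vertices, and the support
has `k * c` vertices. -/
def IsCycleClass {V : Type*} (H F : SimpleGraph V) (k c : ℕ) : Prop :=
  F ≤ H ∧ (∀ v ∈ F.support, (F.neighborSet v).ncard = 2) ∧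
  (∀ v ∈ F.support, {w | F.Reachable v w}.ncard = k) ∧
  F.support.ncard = k * c

/-- An almost resolvable `k`-cycle system of order `v`: a partition of the
edges of `K_v` into `(v-1)/2` almost parallel classes (each a vertex-disjoint
union of `(v-1)/k` `k`-cycles) together with one half-parallel class
(a vertex-disjoint union of `(v-1)/(2k)` `k`-cycles). -/
def IsARCS (k v : ℕ) : Prop :=
  ∃ F : Fin ((v - 1) / 2) ⊕ Unit → SimpleGraph (Fin v),
    (∀ i, IsCycleClass ⊤ (F (Sum.inl i)) k ((v - 1) / k)) ∧
    (∀ j, IsCycleClass ⊤ (F (Sum.inr j)) k ((v - 1) / (2 * k))) ∧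
    IsDecomp (⊤ : SimpleGraph (Fin v)) F

/-- The lexicographic product `C_m[n]` of the cycle `C_m` with the empty graph
on `n` vertices, on vertex set `ZMod m × ZMod n`. -/
def lexCycle (m n : ℕ) : SimpleGraph (ZMod m × ZMod n) :=
  SimpleGraph.fromRel (fun a b => a.1 - b.1 = 1)

/-- The Cayley graph of an additive group with connection set `S`. -/
def cayley {Γ : Type*} [AddGroup Γ] (S : Set Γ) : SimpleGraph Γ :=
  SimpleGraph.fromRel (fun a b => a - b ∈ S)

/-!
Give an edge from `(l, x)` to `(l + 1, y)` of `C_m[n]` the difference `y - x`, and split the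
differences into a set `D` meeting each pair `±e` at most once and its complement.

* If the differences `d l`, for `l` in `ZMod m`, have zero sum, then the edges of difference `d l`
  leaving layer `l` form a `C_m`-factor. The edges with difference outside `D` are partitioned by
  zero-sum tuples in which each such difference occurs once in each position.
* The edges with difference in `D` lie over the edges of `Cay(ZMod n, ±D)`. A Hamiltonian cycle of
  this Cayley graph lifts to `C_m[n]` by moving up a layer along a difference in `D` and down a
  layer along one in `-D`; if the signs sum to zero modulo `m`, the lift closes up after `n` steps
  and is a `C_n`-factor. These edges are partitioned by a decomposition of the Cayley graph into
  such cycles.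

Both kinds of factor consist of the orbits of a skew product over a cyclic permutation, whose period
is that of the base because the cocycle sums to zero. For `m = 3` and `n = 13` suitable tuples and
cycles are written down explicitly.
-/

open Equiv Function

variable {V A B : Type*}

theorem isDecomp_iff_existsUnique {ι : Type*} {H : SimpleGraph V} {F : ι → SimpleGraph V} :
    IsDecomp H F ↔ (∀ i, F i ≤ H) ∧ ∀ a b, H.Adj a b → ∃! i, (F i).Adj a b := by
  constructor
  · rintro ⟨hdisj, hcover⟩
    refine ⟨fun i a b hab => (hcover s(a, b)).2 ⟨i, hab⟩, fun a b hab => ?_⟩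
    obtain ⟨i, hi⟩ := (hcover s(a, b)).1 hab
    refine ⟨i, hi, fun j hj => by_contra fun hji => ?_⟩
    exact Set.disjoint_left.1 (hdisj hji) ((F j).mem_edgeSet.2 hj) ((F i).mem_edgeSet.2 hi)
  · rintro ⟨hle, hunique⟩
    refine ⟨fun i j hij => Set.disjoint_left.2 fun e => ?_, fun e => ?_⟩ <;>
      induction e with | _ a b
    · exact fun hi hj => hij ((hunique a b (hle i hi)).unique hi hj)
    · exact ⟨fun hab => (hunique a b hab).exists, fun ⟨i, hi⟩ => hle i hi⟩

/-- The undirected graph of a permutation: each `a` is joined to `σ a`, so that the nontrivial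
cycles of `σ` become the components of the graph. -/
def permGraph (σ : Perm V) : SimpleGraph V := SimpleGraph.fromRel fun a b => σ a = b

section permGraph

variable {H : SimpleGraph V} {σ : Perm V}

theorem permGraph_adj {a b : V} : (permGraph σ).Adj a b ↔ a ≠ b ∧ (σ a = b ∨ σ b = a) :=
  SimpleGraph.fromRel_adj _ a b

theorem permGraph_le (h : ∀ a, H.Adj a (σ a)) : permGraph σ ≤ H := by
  intro a b hab
  obtain ⟨-, rfl | rfl⟩ := permGraph_adj.1 hab
  exacts [h a, (h b).symm]

theorem permGraph_neighborSet (hσ : ∀ a, σ a ≠ a) (a : V) :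
    (permGraph σ).neighborSet a = {σ a, σ⁻¹ a} := by
  ext b
  rw [SimpleGraph.mem_neighborSet, permGraph_adj, Set.mem_insert_iff, Set.mem_singleton_iff,
    Perm.eq_inv_iff_eq, eq_comm (a := b)]
  refine and_iff_right_of_imp ?_
  rintro hab rfl
  exact hσ a (hab.elim id id)

theorem permGraph_reachable_iff_sameCycle {a b : V} :
    (permGraph σ).Reachable a b ↔ σ.SameCycle a b := by
  constructor
  · rw [SimpleGraph.reachable_iff_reflTransGen]
    intro h
    induction h with
    | refl => exact Perm.SameCycle.rfl
    | tail _ hbc ih =>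
      obtain ⟨-, rfl | rfl⟩ := permGraph_adj.1 hbc
      exacts [Perm.sameCycle_apply_right.2 ih, Perm.sameCycle_apply_right.1 ih]
  · have reachable_apply (c : V) : (permGraph σ).Reachable c (σ c) := by
      by_cases hc : c = σ c
      · rw [← hc]
      · exact (permGraph_adj.2 ⟨hc, .inl rfl⟩).reachable
    rintro ⟨i, rfl⟩
    induction i with
    | zero => rfl
    | succ i ih =>
      rw [add_comm, zpow_one_add]
      exact ih.trans (reachable_apply _)
    | pred i ih =>
      have step := reachable_apply ((σ ^ (-i - 1 : ℤ)) a)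
      rw [← Perm.mul_apply, ← zpow_one_add, add_sub_cancel] at step
      exact ih.trans step.symm

theorem ncard_setOf_sameCycle (σ : Perm V) (a : V) :
    {b | σ.SameCycle a b}.ncard = minimalPeriod σ a := by
  have orbit_eq : {b | σ.SameCycle a b} = MulAction.orbit (Subgroup.zpowers σ) a := by
    ext b
    simp [Perm.SameCycle, MulAction.mem_orbit_iff, Subgroup.smul_def]
  rw [orbit_eq, ← Nat.card_coe_set_eq, Nat.card_congr (MulAction.orbitZPowersEquiv σ a),
    Nat.card_zmod]
  rfl

theorem isCycleFactor_permGraph {k : ℕ} (hk : 2 < k) (hperiod : ∀ a, minimalPeriod σ a = k)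
    (hadj : ∀ a, H.Adj a (σ a)) : IsCycleFactor H (permGraph σ) k := by
  have apply_ne_inv (a : V) : σ a ≠ σ⁻¹ a := by
    intro h
    have periodic : IsPeriodicPt σ 2 a := Perm.eq_inv_iff_eq.1 h
    exact hk.not_ge (hperiod a ▸ periodic.minimalPeriod_le two_pos)
  refine ⟨permGraph_le hadj, fun a => ?_, fun a => ?_⟩
  · rw [permGraph_neighborSet fun a => (hadj a).ne', Set.ncard_pair (apply_ne_inv a)]
  · simp only [permGraph_reachable_iff_sameCycle, ncard_setOf_sameCycle, hperiod]

end permGraph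

theorem minimalPeriod_permCongr (e : A ≃ B) (σ : Perm A) (b : B) :
    minimalPeriod (e.permCongr σ) b = minimalPeriod σ (e.symm b) := by
  have semiconj : Semiconj e.symm (e.permCongr σ) σ := fun b => by simp
  refine minimalPeriod_eq_minimalPeriod_iff.2 fun k => ?_
  rw [IsPeriodicPt, IsPeriodicPt, IsFixedPt, IsFixedPt, ← (semiconj.iterate_right k).eq,
    e.symm.injective.eq_iff]

section IsCycleOn

variable [Fintype A] {π : Perm A}

theorem isPeriodicPt_iff_card_dvd (hπ : π.IsCycleOn Set.univ) {k : ℕ} {a : A} :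
    IsPeriodicPt π k a ↔ Fintype.card A ∣ k := by
  rw [← Finset.coe_univ] at hπ
  rw [IsPeriodicPt, IsFixedPt, Perm.iterate_eq_pow, hπ.pow_apply_eq (Finset.mem_univ a),
    Finset.card_univ]

theorem birkhoffSum_card_eq_sum [AddCommMonoid B] (hπ : π.IsCycleOn Set.univ) (g : A → B)
    (a : A) : birkhoffSum π g (Fintype.card A) a = ∑ x, g x := by
  rw [← Finset.coe_univ] at hπ
  refine Finset.sum_bij (fun i _ => π^[i] a) (fun _ _ => Finset.mem_univ _) ?_ ?_ fun _ _ => rfl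
  · intro i hi j hj hij
    rw [Perm.iterate_eq_pow, Perm.iterate_eq_pow,
      hπ.pow_apply_eq_pow_apply (Finset.mem_univ a)] at hij
    exact hij.eq_of_lt_of_lt (Finset.mem_range.1 hi) (Finset.mem_range.1 hj)
  · intro b _
    obtain ⟨i, hi, rfl⟩ := hπ.exists_pow_eq (Finset.mem_univ a) (Finset.mem_univ b)
    exact ⟨i, Finset.mem_range.2 hi, by rw [Perm.iterate_eq_pow]⟩

end IsCycleOn

/-- The skew product of a permutation `π` of the base `A` with a cocycle `g`: it moves the base by
`π` and translates the fibre over `a` by `g a`. -/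
def skewProduct [AddGroup B] (π : Perm A) (g : A → B) : Perm (A × B) :=
  prodShear π fun a => Equiv.addRight (g a)

section skewProduct

variable [AddCommGroup B] {π : Perm A} {g : A → B}

theorem skewProduct_apply (p : A × B) : skewProduct π g p = (π p.1, p.2 + g p.1) := rfl

theorem skewProduct_iterate (k : ℕ) (p : A × B) :
    (skewProduct π g)^[k] p = (π^[k] p.1, p.2 + birkhoffSum π g k p.1) := by
  induction k with
  | zero => simp
  | succ k ih =>
    simp only [iterate_succ_apply', ih, skewProduct_apply, birkhoffSum_succ, add_assoc]

theorem minimalPeriod_skewProduct [Fintype A] (hπ : π.IsCycleOn Set.univ) (hg : ∑ a, g a = 0)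
    (p : A × B) : minimalPeriod (skewProduct π g) p = Fintype.card A := by
  refine Nat.dvd_antisymm (IsPeriodicPt.minimalPeriod_dvd ?_) ?_
  · have base_periodic := (isPeriodicPt_iff_card_dvd hπ (a := p.1)).2 dvd_rfl
    rw [IsPeriodicPt, IsFixedPt, skewProduct_iterate, base_periodic.eq,
      birkhoffSum_card_eq_sum hπ, hg, add_zero]
  · have periodic := isPeriodicPt_minimalPeriod (skewProduct π g) p
    rw [IsPeriodicPt, IsFixedPt, skewProduct_iterate] at periodic
    exact (isPeriodicPt_iff_card_dvd hπ).1 (congrArg Prod.fst periodic)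

end skewProduct

section cayley

variable {G : Type*} [AddGroup G] {D : Set G} {x y : G}

theorem zero_notMem_of_neg_notMem (hD : ∀ e ∈ D, -e ∉ D) : 0 ∉ D :=
  fun h => hD 0 h (by rwa [neg_zero])

theorem cayley_adj (hD : 0 ∉ D) : (cayley D).Adj x y ↔ y - x ∈ D ∨ x - y ∈ D := by
  rw [cayley, SimpleGraph.fromRel_adj, or_comm]
  refine and_iff_right_of_imp ?_
  rintro h rfl
  exact hD (by simpa using h)

theorem sub_notMem_iff_of_cayley_adj (hD : ∀ e ∈ D, -e ∉ D) (hxy : (cayley D).Adj x y) :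
    y - x ∉ D ↔ x - y ∈ D := by
  refine ⟨((cayley_adj (zero_notMem_of_neg_notMem hD)).1 hxy).resolve_left, fun h => ?_⟩
  rw [← neg_sub]
  exact hD _ h

end cayley

variable {m n : ℕ}

theorem lexCycle_adj (hm : 1 < m) {a b : ZMod m × ZMod n} :
    (lexCycle m n).Adj a b ↔ b.1 = a.1 + 1 ∨ a.1 = b.1 + 1 := by
  have : Fact (1 < m) := ⟨hm⟩
  rw [lexCycle, SimpleGraph.fromRel_adj, sub_eq_iff_eq_add', sub_eq_iff_eq_add', or_comm]
  refine and_iff_right_of_imp ?_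
  rintro h rfl
  simp at h

theorem add_one_add_one_ne (hm : 2 < m) (l : ZMod m) : l + 1 + 1 ≠ l := by
  have : Fact (2 < m) := ⟨hm⟩
  rw [add_assoc, Ne, add_eq_left, ← neg_eq_iff_add_eq_zero]
  exact ZMod.neg_one_ne_one

/-- The permutation of the vertices of `C_m[n]` that advances every layer to the next one, adding
`d l` to the second coordinate on leaving layer `l`. -/
def layerShift (d : ZMod m → ZMod n) : Perm (ZMod m × ZMod n) :=
  skewProduct (Equiv.addRight 1) d

section layerShift

variable {d : ZMod m → ZMod n}

theorem isCycleOn_addRight_one : (Equiv.addRight 1 : Perm (ZMod m)).IsCycleOn Set.univ := by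
  refine ⟨(Equiv.bijective _).bijOn_univ, fun x _ y _ => ?_⟩
  obtain ⟨i, hi⟩ := ZMod.intCast_surjective (y - x)
  exact ⟨i, by simp [hi]⟩

theorem isCycleFactor_permGraph_layerShift [NeZero m] (hm : 2 < m) (hd : ∑ l, d l = 0) :
    IsCycleFactor (lexCycle m n) (permGraph (layerShift d)) m := by
  refine isCycleFactor_permGraph hm (fun a => ?_) fun a => ?_
  · rw [layerShift, minimalPeriod_skewProduct isCycleOn_addRight_one hd, ZMod.card]
  · exact (lexCycle_adj (by lia)).2 (.inl rfl)

theorem permGraph_layerShift_adj (hm : 2 < m) {l : ZMod m} {x y : ZMod n} :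
    (permGraph (layerShift d)).Adj (l, x) (l + 1, y) ↔ d l = y - x := by
  have : Fact (1 < m) := ⟨by lia⟩
  simp [permGraph_adj, layerShift, skewProduct_apply, add_one_add_one_ne hm, eq_sub_iff_add_eq']

end layerShift

/-- The lift of a permutation `π` of `ZMod n` to `C_m[n]`: a step of `π` along a difference in `D`
goes up one layer, any other step goes down one layer. -/
def signedLift (D : Finset (ZMod n)) (π : Perm (ZMod n)) : Perm (ZMod m × ZMod n) :=
  (Equiv.prodComm _ _).permCongr (skewProduct π fun x => if π x - x ∈ D then 1 else -1)

section signedLift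

variable {D : Finset (ZMod n)} {π : Perm (ZMod n)}

theorem signedLift_apply (l : ZMod m) (x : ZMod n) :
    signedLift D π (l, x) = (l + if π x - x ∈ D then 1 else -1, π x) := rfl

theorem isCycleFactor_permGraph_signedLift [NeZero n] (hm : 1 < m) (hn : 2 < n)
    (hπ : π.IsCycleOn Set.univ)
    (hsum : ∑ x, (if π x - x ∈ D then 1 else -1 : ZMod m) = 0) :
    IsCycleFactor (lexCycle m n) (permGraph (signedLift D π)) n := by
  refine isCycleFactor_permGraph hn (fun a => ?_) fun ⟨l, x⟩ => ?_
  · rw [signedLift, minimalPeriod_permCongr, minimalPeriod_skewProduct hπ hsum, ZMod.card]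
  · rw [lexCycle_adj hm, signedLift_apply]
    split_ifs <;> simp

theorem permGraph_signedLift_adj (hm : 2 < m) (hD : ∀ e ∈ D, -e ∉ D)
    (hπ : ∀ x, (cayley (D : Set (ZMod n))).Adj x (π x)) {l : ZMod m} {x y : ZMod n} :
    (permGraph (signedLift D π)).Adj (l, x) (l + 1, y) ↔ y - x ∈ D ∧ (permGraph π).Adj x y := by
  have : Fact (1 < m) := ⟨by lia⟩
  have : Fact (2 < m) := ⟨hm⟩
  have up_iff : signedLift D π (l, x) = (l + 1, y) ↔ y - x ∈ D ∧ π x = y := by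
    rw [signedLift_apply, Prod.mk.injEq, add_right_inj]
    refine and_congr_left ?_
    rintro rfl
    simp [ZMod.neg_one_ne_one]
  have down_iff : signedLift D π (l + 1, y) = (l, x) ↔ y - x ∈ D ∧ π y = x := by
    rw [signedLift_apply, Prod.mk.injEq]
    refine and_congr_left ?_
    rintro rfl
    refine Iff.trans ?_ (sub_notMem_iff_of_cayley_adj hD (hπ y))
    split_ifs with h <;> simp [h, add_one_add_one_ne hm]
  have ne_of_sub_mem (h : y - x ∈ D) : x ≠ y := by
    rintro rfl
    exact zero_notMem_of_neg_notMem hD (by simpa using h)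
  have ne_layer : (l, x) ≠ (l + 1, y) := by simp
  rw [permGraph_adj, permGraph_adj, up_iff, down_iff, ← and_or_left, and_iff_right ne_layer]
  exact and_congr_right fun h => (and_iff_right (ne_of_sub_mem h)).symm

end signedLift

section lexCycleFactor

variable {α β : ℕ} {D : Finset (ZMod n)} {d : Fin α → ZMod m → ZMod n}
  {π : Fin β → Perm (ZMod n)}

/-- The candidate `2`-factors of `C_m[n]`: the graphs of the layer shifts `d i` and of the signed
lifts of the `π j`. -/
def lexCycleFactor (D : Finset (ZMod n)) (d : Fin α → ZMod m → ZMod n)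
    (π : Fin β → Perm (ZMod n)) : Fin α ⊕ Fin β → SimpleGraph (ZMod m × ZMod n) :=
  Sum.elim (fun i => permGraph (layerShift (d i))) fun j => permGraph (signedLift D (π j))

theorem existsUnique_lexCycleFactor_adj (hm : 2 < m) (hD : ∀ e ∈ D, -e ∉ D)
    (hd_injective : ∀ l, Injective (d · l)) (hd_range : ∀ l e, (∃ i, d i l = e) ↔ e ∉ D)
    (hπ_adj : ∀ j x, (cayley (D : Set (ZMod n))).Adj x (π j x))
    (hπ_decomp : IsDecomp (cayley (D : Set (ZMod n))) fun j => permGraph (π j))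
    (l : ZMod m) (x y : ZMod n) :
    ∃! i, (lexCycleFactor D d π i).Adj (l, x) (l + 1, y) := by
  have shift_adj (i : Fin α) : (lexCycleFactor D d π (.inl i)).Adj (l, x) (l + 1, y) ↔
      d i l = y - x := permGraph_layerShift_adj hm
  have lift_adj (j : Fin β) : (lexCycleFactor D d π (.inr j)).Adj (l, x) (l + 1, y) ↔
      y - x ∈ D ∧ (permGraph (π j)).Adj x y := permGraph_signedLift_adj hm hD (hπ_adj j)
  by_cases hxy : y - x ∈ D
  · obtain ⟨j, hj, hj_unique⟩ := (isDecomp_iff_existsUnique.1 hπ_decomp).2 x y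
      ((cayley_adj (zero_notMem_of_neg_notMem hD)).2 (.inl hxy))
    refine ⟨.inr j, (lift_adj j).2 ⟨hxy, hj⟩, ?_⟩
    rintro (i | k) h
    · exact absurd hxy ((hd_range l _).1 ⟨i, (shift_adj i).1 h⟩)
    · exact congrArg Sum.inr (hj_unique k ((lift_adj k).1 h).2)
  · obtain ⟨i, hi⟩ := (hd_range l _).2 hxy
    refine ⟨.inl i, (shift_adj i).2 hi, ?_⟩
    rintro (k | j) h
    · exact congrArg Sum.inl (hd_injective l (((shift_adj k).1 h).trans hi.symm))
    · exact absurd ((lift_adj j).1 h).1 hxy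

theorem hw_lexCycle_of_isDecomp_cayley [NeZero m] [NeZero n] (hm : 2 < m) (hn : 2 < n)
    (hD : ∀ e ∈ D, -e ∉ D) (hd_sum : ∀ i, ∑ l, d i l = 0)
    (hd_injective : ∀ l, Injective (d · l)) (hd_range : ∀ l e, (∃ i, d i l = e) ↔ e ∉ D)
    (hπ_cycle : ∀ j, (π j).IsCycleOn Set.univ)
    (hπ_sum : ∀ j, ∑ x, (if π j x - x ∈ D then 1 else -1 : ZMod m) = 0)
    (hπ_decomp : IsDecomp (cayley (D : Set (ZMod n))) fun j => permGraph (π j)) :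
    HW (lexCycle m n) m n α β := by
  have : Fact (1 < n) := ⟨by lia⟩
  have shift_factor (i : Fin α) := isCycleFactor_permGraph_layerShift hm (hd_sum i)
  have lift_factor (j : Fin β) :=
    isCycleFactor_permGraph_signedLift (by lia) hn (hπ_cycle j) (hπ_sum j)
  have hπ_adj (j : Fin β) (x : ZMod n) : (cayley (D : Set (ZMod n))).Adj x (π j x) := by
    have apply_ne := (hπ_cycle j).apply_ne Set.nontrivial_univ (Set.mem_univ x)
    exact (isDecomp_iff_existsUnique.1 hπ_decomp).1 j (permGraph_adj.2 ⟨apply_ne.symm, .inl rfl⟩)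
  have unique_factor :=
    existsUnique_lexCycleFactor_adj hm hD hd_injective hd_range hπ_adj hπ_decomp
  refine ⟨lexCycleFactor D d π, shift_factor, lift_factor, isDecomp_iff_existsUnique.2 ⟨?_, ?_⟩⟩
  · rintro (i | j)
    exacts [(shift_factor i).1, (lift_factor j).1]
  · rintro ⟨l, x⟩ ⟨l', y⟩ hab
    obtain rfl | rfl := (lexCycle_adj (by lia)).1 hab
    · exact unique_factor l x y
    · simpa only [SimpleGraph.adj_comm] using unique_factor l' y x

end lexCycleFactor

/-- One of each pair `±e` with `1 ≤ e ≤ 5`: the differences `y - x` of the edges from `(l, x)` to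
`(l + 1, y)` that go into the `C_13`-factors. The signs make the sum zero, as it has to be for the
remaining differences to be arranged in zero-sum triples. -/
def liftDifferences : Finset (ZMod 13) := {-1, 2, 3, 4, 5}

/-- Zero-sum triples, found by computer search, in which every difference outside `liftDifferences`
occurs once in each position. -/
def shiftDifferences : Fin 8 → ZMod 3 → ZMod 13 :=
  ![![0, 0, 0], ![1, 1, 11], ![6, 6, 1], ![7, 9, 10], ![8, 10, 8], ![9, 11, 6], ![10, 7, 9],
    ![11, 8, 7]]

/-- The vertex sequences of a decomposition of `Cay(ZMod 13, ±{1, …, 5})` into Hamiltonian cycles,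
found by computer search. Each cycle has `2` modulo `3` steps with difference in `liftDifferences`,
so that its signed lift closes up after `13` steps. -/
def hamiltonianSequence : Fin 5 → List (ZMod 13) :=
  ![[0, 9, 7, 12, 4, 2, 6, 10, 11, 8, 3, 1, 5],
    [0, 1, 11, 2, 3, 6, 7, 5, 8, 4, 9, 10, 12],
    [0, 4, 3, 12, 9, 5, 6, 1, 2, 10, 8, 7, 11],
    [0, 8, 6, 9, 1, 4, 7, 3, 11, 12, 2, 5, 10],
    [0, 3, 5, 4, 6, 11, 9, 8, 12, 1, 10, 7, 2]]

/-- The permutation of `ZMod 13` that moves each vertex to the next one on the `j`-th Hamiltonian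
cycle. -/
def hamiltonianCycle (j : Fin 5) : Perm (ZMod 13) := (hamiltonianSequence j).formPerm

theorem isCycleOn_hamiltonianCycle (j : Fin 5) : (hamiltonianCycle j).IsCycleOn Set.univ := by
  have nodup : (hamiltonianSequence j).Nodup := by decide +revert
  have mem (x : ZMod 13) : x ∈ hamiltonianSequence j := by decide +revert
  rw [← Set.eq_univ_of_forall mem]
  exact nodup.isCycleOn_formPerm

theorem sum_hamiltonianCycle_sign (j : Fin 5) :
    ∑ x, (if hamiltonianCycle j x - x ∈ liftDifferences then 1 else -1 : ZMod 3) = 0 := by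
  decide +kernel +revert

theorem isDecomp_cayley_hamiltonianCycle :
    IsDecomp (cayley (liftDifferences : Set (ZMod 13)))
      fun j => permGraph (hamiltonianCycle j) := by
  have zero_notMem : (0 : ZMod 13) ∉ (liftDifferences : Set (ZMod 13)) := by decide
  refine isDecomp_iff_existsUnique.2 ⟨fun j => permGraph_le ?_, ?_⟩ <;>
    simp only [cayley_adj zero_notMem, permGraph_adj, Finset.mem_coe]
  · decide +kernel +revert
  · unfold ExistsUnique
    decide +kernel

theorem stmt16 : HW (lexCycle 3 13) 3 13 8 5 := by
  have antisymmetric : ∀ e ∈ liftDifferences, -e ∉ liftDifferences := by decide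
  have zero_sum (i : Fin 8) : ∑ l, shiftDifferences i l = 0 := by decide +revert
  have injective (l : ZMod 3) : Injective (shiftDifferences · l) := by decide +revert
  have range (l : ZMod 3) (e : ZMod 13) :
      (∃ i, shiftDifferences i l = e) ↔ e ∉ liftDifferences := by decide +revert
  exact hw_lexCycle_of_isDecomp_cayley (by decide) (by decide) antisymmetric zero_sum injective
    range isCycleOn_hamiltonianCycle sum_hamiltonianCycle_sign isDecomp_cayley_hamiltonianCycle
end

section
/- Let n, m and α be odd integers with n ≥ m ≥ 3 and 0 ≤ α ≤ n, and let β = n − α. If it is not the case that α ∈ {2, 4} or β ∈ {1, 3}, then (α, β) ∈ HWP(C_m[n]; m, n); conversely, (α, β) ∈ HWP(C_m[n]; m, n) implies β = n − α. -/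
open SimpleGraph

/-!
Orient every edge of `C_m[n]` from a layer `i` to layer `i + 1` and record the difference of its
`ZMod n`-coordinates. Choosing one difference in each layer so that the choices sum to zero gives a
`C_m`-factor. Choosing a pair `c i ± w` in each layer, with `w` a unit and `∑ i, c i = 0`, gives a
graph that, in suitable coordinates, joins `(i, y)` to `(i + 1, y ± 1)`; since `m ≤ n` are both odd
there are signs `ε : ZMod n → {1, -1}` with sum `m`, and splitting the edges according to `ε y`
yields two `C_n`-factors, because a cycle that runs once through the `y`-coordinate returns to its
starting layer.

It remains to tile `ZMod n` in every layer by `α` singletons and `β / 2` pairs so that corresponding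
tiles sum to zero. Three layers suffice: the others take the first tiling and its negative
alternately. For three layers, represent `ZMod n` by the small even and the small odd integers. The
even ones are twice an interval, tiled by zero-sum triples of singletons; the odd ones are pairs
`4 * g ± 1` with `g` in an interval, tiled in the same way. Such tilings exist for intervals of odd
length. If `β / 2` is even and positive, one pair is moved to the even integers, where a pair
`c ± 1` has to be removed from each of the three intervals.

The converse compares degrees.
-/

section CyclicSums

variable {G : Type*} [AddCommGroup G] {m : ℕ} [NeZero m]

lemma sum_zmod_val_eq_sum_range (f : ℕ → G) :
    ∑ i : ZMod m, f i.val = ∑ j ∈ Finset.range m, f j :=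
  Finset.sum_nbij' ZMod.val Nat.cast (fun i _ ↦ Finset.mem_range.2 i.val_lt)
    (fun _ _ ↦ Finset.mem_univ _) (fun i _ ↦ ZMod.natCast_zmod_val i)
    (fun _ hj ↦ ZMod.val_natCast_of_lt (Finset.mem_range.1 hj)) (fun _ _ ↦ rfl)

lemma exists_apply_add_one_eq_add_of_sum_eq_zero (d : ZMod m → G) (hd : ∑ i, d i = 0) :
    ∃ D : ZMod m → G, ∀ i, D (i + 1) = D i + d i := by
  have hrange : ∑ j ∈ Finset.range m, d j = 0 := by
    simpa only [ZMod.natCast_zmod_val, hd] using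
      (sum_zmod_val_eq_sum_range (m := m) fun j ↦ d j).symm
  refine ⟨fun i ↦ ∑ j ∈ Finset.range i.val, d j, fun i ↦ ?_⟩
  have hsucc : ∑ j ∈ Finset.range (i.val + 1), d j =
      ∑ j ∈ Finset.range i.val, d j + d i := by
    rw [Finset.sum_range_succ, ZMod.natCast_zmod_val]
  have hcast : ((i.val + 1 : ℕ) : ZMod m) = i + 1 := by simp
  beta_reduce
  rw [← hsucc, ← hcast]
  obtain hlt | hlast : i.val + 1 < m ∨ i.val + 1 = m := by have := i.val_lt; lia
  · rw [ZMod.val_natCast_of_lt hlt]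
  · rw [hlast, ZMod.natCast_self, ZMod.val_zero, Finset.sum_range_zero, hrange]

end CyclicSums

lemma two_ne_zero_zmod {k : ℕ} (hk : 3 ≤ k) : (2 : ZMod k) ≠ 0 := fun h ↦ by
  have hdvd : k ∣ 2 := (ZMod.natCast_eq_zero_iff 2 k).1 (mod_cast h)
  have := Nat.le_of_dvd two_pos hdvd
  lia

lemma exists_signs_sum_eq {Y : Type*} [Fintype Y] {m : ℕ} (hm : m ≤ Fintype.card Y)
    (heven : Even (Fintype.card Y + m)) : ∃ ε : Y → ℤˣ, ∑ y, (ε y : ℤ) = m := by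
  classical
  obtain ⟨a, ha⟩ := heven
  obtain ⟨S, -, hS⟩ := Finset.exists_subset_card_eq
    (show a ≤ (Finset.univ : Finset Y).card by rw [Finset.card_univ]; lia)
  have hcompl : S.card + Sᶜ.card = Fintype.card Y := Finset.card_add_card_compl S
  refine ⟨fun y ↦ if y ∈ S then 1 else -1, ?_⟩
  calc ∑ y, ((if y ∈ S then 1 else -1 : ℤˣ) : ℤ)
      = ∑ _y ∈ S, (1 : ℤ) + ∑ _y ∈ Sᶜ, (-1 : ℤ) := by
        rw [← Finset.sum_add_sum_compl S]
        congr 1 <;> refine Finset.sum_congr rfl fun y hy ↦ ?_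
        · simp [hy]
        · simp [Finset.mem_compl.1 hy]
    _ = m := by
        simp only [Finset.sum_const, nsmul_eq_mul]
        lia

section CycleFactor

variable {V W : Type*} {H F : SimpleGraph V} {k : ℕ}

lemma ncard_neighborSet_eq_two_of_equiv (hk : 3 ≤ k) (φ : V ≃ ZMod k × W)
    (hF : ∀ u v, F.Adj u v ↔ (φ u).2 = (φ v).2 ∧
      ((φ v).1 = (φ u).1 + 1 ∨ (φ u).1 = (φ v).1 + 1)) (v : V) :
    (F.neighborSet v).ncard = 2 := by
  have hnbr : F.neighborSet v =
      {φ.symm ((φ v).1 + 1, (φ v).2), φ.symm ((φ v).1 - 1, (φ v).2)} := by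
    ext w
    simp only [mem_neighborSet, hF, Set.mem_insert_iff, Set.mem_singleton_iff,
      Equiv.eq_symm_apply, Prod.ext_iff, eq_sub_iff_add_eq]
    grind
  rw [hnbr, Set.ncard_pair]
  intro h
  have hfst : (φ v).1 + 1 = (φ v).1 - 1 := congrArg Prod.fst (φ.symm.injective h)
  exact two_ne_zero_zmod hk (by linear_combination hfst)

lemma setOf_reachable_eq_range_of_equiv [NeZero k] (φ : V ≃ ZMod k × W)
    (hF : ∀ u v, F.Adj u v ↔ (φ u).2 = (φ v).2 ∧
      ((φ v).1 = (φ u).1 + 1 ∨ (φ u).1 = (φ v).1 + 1)) (v : V) :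
    {w | F.Reachable v w} = Set.range fun a ↦ φ.symm (a, (φ v).2) := by
  ext w
  constructor
  · rintro ⟨p⟩
    have hsnd : (φ w).2 = (φ v).2 := by
      induction p with
      | nil => rfl
      | cons h _ ih => rw [ih, ((hF _ _).1 h).1]
    exact ⟨(φ w).1, by simp [← hsnd]⟩
  · rintro ⟨a, rfl⟩
    have hwalk (t : ℕ) : F.Reachable v (φ.symm ((φ v).1 + t, (φ v).2)) := by
      induction t with
      | zero => simp
      | succ t ih => exact ih.trans (Adj.reachable ((hF _ _).2 (by simp [add_assoc])))
    simpa using hwalk (a - (φ v).1).val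

lemma isCycleFactor_of_equiv (hk : 3 ≤ k) (hle : F ≤ H) (φ : V ≃ ZMod k × W)
    (hF : ∀ u v, F.Adj u v ↔ (φ u).2 = (φ v).2 ∧
      ((φ v).1 = (φ u).1 + 1 ∨ (φ u).1 = (φ v).1 + 1)) : IsCycleFactor H F k := by
  have : NeZero k := ⟨by lia⟩
  refine ⟨hle, ncard_neighborSet_eq_two_of_equiv hk φ hF, fun v ↦ ?_⟩
  have hinj : Function.Injective fun a ↦ φ.symm (a, (φ v).2) := fun a b h ↦ by simpa using h
  rw [setOf_reachable_eq_range_of_equiv φ hF, Set.ncard_range_of_injective hinj, Nat.card_zmod]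

end CycleFactor

section Decomposition

variable {V ι κ : Type*} {H : SimpleGraph V} {m n : ℕ}

lemma IsDecomp.comp_equiv {F : ι → SimpleGraph V} (h : IsDecomp H F) (e : κ ≃ ι) :
    IsDecomp H (F ∘ e) :=
  ⟨fun _ _ hij ↦ h.1 (e.injective.ne hij), fun x ↦ (h.2 x).trans e.surjective.exists⟩

lemma hw_of_isDecomp [Fintype ι] [Fintype κ] {F : ι ⊕ κ → SimpleGraph V}
    (hι : ∀ i, IsCycleFactor H (F (Sum.inl i)) m) (hκ : ∀ k, IsCycleFactor H (F (Sum.inr k)) n)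
    (hF : IsDecomp H F) : HW H m n (Fintype.card ι) (Fintype.card κ) :=
  ⟨_, fun _ ↦ hι _, fun _ ↦ hκ _,
    hF.comp_equiv ((Fintype.equivFin ι).symm.sumCongr (Fintype.equivFin κ).symm)⟩

lemma HW.ncard_neighborSet {α β : ℕ} (h : HW H m n α β) (v : V) :
    (H.neighborSet v).ncard = 2 * (α + β) := by
  obtain ⟨F, hα, hβ, hdisj, hcover⟩ := h
  have htwo : ∀ i, ((F i).neighborSet v).ncard = 2 := by
    rintro (i | i)
    exacts [(hα i).2.1 v, (hβ i).2.1 v]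
  have hunion : H.neighborSet v = ⋃ i, (F i).neighborSet v := by
    ext w
    simpa using hcover s(v, w)
  have hpairwise : Pairwise (Function.onFun Disjoint fun i ↦ (F i).neighborSet v) :=
    fun i j hij ↦ Set.disjoint_left.2 fun w hi hj ↦
      Set.disjoint_left.1 (hdisj hij) (show s(v, w) ∈ (F i).edgeSet from hi) hj
  rw [hunion, Set.ncard_iUnion_of_finite
    (fun i ↦ Set.finite_of_ncard_ne_zero (by simp [htwo])) hpairwise]
  simp [finsum_eq_sum_of_fintype, htwo, mul_comm]

end Decomposition

lemma ncard_neighborSet_lexCycle {m n : ℕ} (hm : 3 ≤ m) (v : ZMod m × ZMod n) :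
    ((lexCycle m n).neighborSet v).ncard = 2 * n := by
  have htwo := two_ne_zero_zmod hm
  have hnbr : (lexCycle m n).neighborSet v = {v.1 + 1, v.1 - 1} ×ˢ Set.univ := by
    ext w
    simp only [lexCycle, mem_neighborSet, fromRel_adj, Set.mem_prod, Set.mem_insert_iff,
      Set.mem_singleton_iff, Set.mem_univ, and_true]
    constructor
    · rintro ⟨-, h | h⟩
      · exact Or.inr (by linear_combination -h)
      · exact Or.inl (by linear_combination h)
    · refine fun h ↦ ⟨?_, ?_⟩
      · rintro rfl
        rcases h with h | h
        · exact htwo (by linear_combination -2 * h)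
        · exact htwo (by linear_combination 2 * h)
      · rcases h with h | h
        · exact Or.inr (by linear_combination h)
        · exact Or.inl (by linear_combination -h)
  have hne : v.1 + 1 ≠ v.1 - 1 := fun h ↦ htwo (by linear_combination h)
  rw [hnbr, Set.ncard_prod, Set.ncard_pair hne, Set.ncard_univ, Nat.card_zmod]

section ArcColouring

variable {m n : ℕ} {C : Type*} {col : ZMod m → ZMod n → ZMod n → C} {c : C}

/-- The colour class of `c` for a colouring of the edges of `C_m[n]`. Every edge is oriented from
its layer `i` to layer `i + 1`, and `col i x x'` is the colour of the arc from `(i, x)` to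
`(i + 1, x')`. -/
def arcClass (col : ZMod m → ZMod n → ZMod n → C) (c : C) : SimpleGraph (ZMod m × ZMod n) :=
  fromRel fun u v ↦ v.1 = u.1 + 1 ∧ col u.1 u.2 v.2 = c

lemma arcClass_adj (hm : 3 ≤ m) {u v : ZMod m × ZMod n} :
    (arcClass col c).Adj u v ↔ (v.1 = u.1 + 1 ∧ col u.1 u.2 v.2 = c) ∨
      (u.1 = v.1 + 1 ∧ col v.1 v.2 u.2 = c) := by
  refine ⟨fun h ↦ h.2, fun h ↦ ⟨?_, h⟩⟩
  rintro rfl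
  rcases h with ⟨h, -⟩ | ⟨h, -⟩ <;> exact two_ne_zero_zmod hm (by linear_combination -2 * h)

lemma arcClass_le_lexCycle : arcClass col c ≤ lexCycle m n := fun _ _ h ↦
  ⟨h.1, h.2.symm.imp (fun a ↦ sub_eq_iff_eq_add'.2 a.1) (fun a ↦ sub_eq_iff_eq_add'.2 a.1)⟩

lemma isDecomp_arcClass (hm : 3 ≤ m) (col : ZMod m → ZMod n → ZMod n → C) :
    IsDecomp (lexCycle m n) (arcClass col) := by
  have not_both_directions {i j : ZMod m} (hij : j = i + 1) (hji : i = j + 1) : False :=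
    two_ne_zero_zmod hm (by linear_combination -hij - hji)
  refine ⟨fun c c' hcc ↦ Set.disjoint_left.2 fun e ↦ ?_, fun e ↦ ?_⟩ <;> induction e with | _ u v
  · simp only [mem_edgeSet, arcClass_adj hm]
    rintro (⟨h, hc⟩ | ⟨h, hc⟩) (⟨h', hc'⟩ | ⟨h', hc'⟩)
    · exact hcc (hc.symm.trans hc')
    · exact not_both_directions h h'
    · exact not_both_directions h' h
    · exact hcc (hc.symm.trans hc')
  · refine ⟨?_, fun ⟨_, hc⟩ ↦ arcClass_le_lexCycle hc⟩
    rintro ⟨hne, h | h⟩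
    · exact ⟨col v.1 v.2 u.2, hne, Or.inr ⟨by linear_combination h, rfl⟩⟩
    · exact ⟨col u.1 u.2 v.2, hne, Or.inl ⟨by linear_combination h, rfl⟩⟩

lemma isCycleFactor_arcClass_of_straight {W : Type*} (hm : 3 ≤ m) (ψ : ZMod m → ZMod n ≃ W)
    (hcol : ∀ i x x', col i x x' = c ↔ ψ (i + 1) x' = ψ i x) :
    IsCycleFactor (lexCycle m n) (arcClass col c) m := by
  refine isCycleFactor_of_equiv hm arcClass_le_lexCycle (Equiv.prodShear (Equiv.refl _) ψ) ?_
  rintro ⟨i, x⟩ ⟨i', x'⟩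
  simp only [arcClass_adj hm, hcol, Equiv.prodShear_apply, Equiv.refl_apply]
  grind

/-- Coordinates on `C_m[n]` adapted to cycles that move one step in the `ZMod n`-coordinate
`y = ψ i x` while the layer changes along `E`: the position `y` on the cycle, and the layer in
which the cycle passes `E = 0`. -/
def zigzagEquiv (ψ : ZMod m → ZMod n ≃ ZMod n) (E : ZMod n → ZMod m) :
    ZMod m × ZMod n ≃ ZMod n × ZMod m where
  toFun p := (ψ p.1 p.2, p.1 - E (ψ p.1 p.2))
  invFun q := (q.2 + E q.1, (ψ (q.2 + E q.1)).symm q.1)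
  left_inv p := by simp
  right_inv q := by simp

lemma isCycleFactor_arcClass_of_zigzag [NeZero n] (hm : 3 ≤ m) (hn : 3 ≤ n)
    (ψ : ZMod m → ZMod n ≃ ZMod n) {ε : ZMod n → ℤˣ} (hε : ∑ y, ((ε y : ℤ) : ZMod m) = 0)
    (hcol : ∀ i x x', col i x x' = c ↔
      (ψ (i + 1) x' = ψ i x + 1 ∧ ε (ψ i x) = 1) ∨
      (ψ i x = ψ (i + 1) x' + 1 ∧ ε (ψ (i + 1) x') = -1)) :
    IsCycleFactor (lexCycle m n) (arcClass col c) n := by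
  obtain ⟨E, hE⟩ := exists_apply_add_one_eq_add_of_sum_eq_zero _ hε
  have hE_pos {y} (h : ε y = 1) : E (y + 1) = E y + 1 := by simp [hE, h]
  have hE_neg {y} (h : ε y = -1) : E (y + 1) = E y - 1 := by simp [hE, h, sub_eq_add_neg]
  refine isCycleFactor_of_equiv hn arcClass_le_lexCycle (zigzagEquiv ψ E) ?_
  have arc_imp {i i' x x'} (h : i' = i + 1 ∧ col i x x' = c) :
      i - E (ψ i x) = i' - E (ψ i' x') ∧ (ψ i' x' = ψ i x + 1 ∨ ψ i x = ψ i' x' + 1) := by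
    obtain ⟨rfl, hc⟩ := h
    rcases (hcol i x x').1 hc with ⟨hy, hs⟩ | ⟨hy, hs⟩
    · exact ⟨by rw [hy, hE_pos hs]; ring, Or.inl hy⟩
    · exact ⟨by rw [hy, hE_neg hs]; ring, Or.inr hy⟩
  have step_imp {i i' x x'} (hlayer : i - E (ψ i x) = i' - E (ψ i' x'))
      (hy : ψ i' x' = ψ i x + 1) :
      (i' = i + 1 ∧ col i x x' = c) ∨ (i = i' + 1 ∧ col i' x' x = c) := by
    rw [hy] at hlayer
    rcases Int.units_eq_one_or (ε (ψ i x)) with hs | hs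
    · obtain rfl : i' = i + 1 := by linear_combination hE_pos hs - hlayer
      exact Or.inl ⟨rfl, (hcol i x x').2 (Or.inl ⟨hy, hs⟩)⟩
    · obtain rfl : i = i' + 1 := by linear_combination hlayer - hE_neg hs
      exact Or.inr ⟨rfl, (hcol i' x' x).2 (Or.inr ⟨hy, hs⟩)⟩
  rintro ⟨i, x⟩ ⟨i', x'⟩
  simp only [arcClass_adj hm, zigzagEquiv, Equiv.coe_fn_mk]
  constructor
  · rintro (h | h)
    · exact arc_imp h
    · exact (arc_imp h).imp Eq.symm Or.symm
  · rintro ⟨hlayer, hy | hy⟩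
    · exact step_imp hlayer hy
    · exact (step_imp hlayer.symm hy).symm

end ArcColouring

section Tile

variable {G G' ι κ : Type*} [AddCommGroup G] [AddCommGroup G']

/-- The points covered by singletons and dominoes placed in `G`: a singleton `r : ι` sits at
`p (Sum.inl r)`, and a domino `k : κ` of half-width `w k` and centre `p (Sum.inr k)` covers
`p (Sum.inr k) ± w k`, the sign being the `ℤˣ`-coordinate. -/
def tile (w : κ → G) (p : ι ⊕ κ → G) : ι ⊕ κ × ℤˣ → G :=
  Sum.elim (p ∘ Sum.inl) fun q ↦ p (Sum.inr q.1) + (q.2 : ℤ) • w q.1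

lemma tile_inl (w : κ → G) (p : ι ⊕ κ → G) (r : ι) : tile w p (Sum.inl r) = p (Sum.inl r) := rfl

lemma map_tile (f : G →+ G') (w : κ → G) (p : ι ⊕ κ → G) :
    tile (f ∘ w) (f ∘ p) = f ∘ tile w p := by
  ext (r | ⟨k, e⟩) <;> simp [tile]

lemma bijective_tile_neg {w : κ → G} {p : ι ⊕ κ → G} (h : Function.Bijective (tile w p)) :
    Function.Bijective (tile w (-p)) := by
  let flip : ι ⊕ κ × ℤˣ ≃ ι ⊕ κ × ℤˣ :=
    (Equiv.refl ι).sumCongr ((Equiv.refl κ).prodCongr (Equiv.neg ℤˣ))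
  have hflip : tile w (-p) = Equiv.neg G ∘ tile w p ∘ flip := by
    ext (r | ⟨k, e⟩) <;> simp [tile, flip, add_comm]
  rw [hflip]
  exact (Equiv.neg G).bijective.comp (h.comp flip.bijective)

end Tile

section TileColour

variable {m n : ℕ} {ι κ : Type*} {ε : ZMod n → ℤˣ} {T : ZMod m → ι ⊕ κ × ℤˣ ≃ ZMod n}
  {ψ : κ → ZMod m → ZMod n ≃ ZMod n}

/-- The colour of the arc from `(i, x)` to `(i + 1, x')` prescribed by tilings `T i` of the
differences `x' - x`. An arc whose difference is covered by a singleton gets that singleton as its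
colour. The two signs of a domino `k` are steps `± 1` of the coordinate `ψ k`, and the arcs over the
step between `y` and `y + 1` are distributed onto the two colours of `k` according to the sign
`ε y`. -/
def tileColour (ε : ZMod n → ℤˣ) (T : ZMod m → ι ⊕ κ × ℤˣ ≃ ZMod n)
    (ψ : κ → ZMod m → ZMod n ≃ ZMod n) (i : ZMod m) (x x' : ZMod n) : ι ⊕ κ × ℤˣ :=
  ((T i).symm (x' - x)).map id fun q ↦
    (q.1, if q.2 = 1 then ε (ψ q.1 i x) else -ε (ψ q.1 (i + 1) x'))

lemma tileColour_eq_inl_iff {i : ZMod m} {x x' : ZMod n} {r : ι} :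
    tileColour ε T ψ i x x' = Sum.inl r ↔ x' - x = T i (Sum.inl r) := by
  rw [← Equiv.symm_apply_eq, tileColour]
  rcases (T i).symm (x' - x) with r' | q <;> simp

lemma tileColour_eq_inr_iff {i : ZMod m} {x x' : ZMod n} {k : κ} {e : ℤˣ} :
    tileColour ε T ψ i x x' = Sum.inr (k, e) ↔
      (x' - x = T i (Sum.inr (k, 1)) ∧ ε (ψ k i x) = e) ∨
      (x' - x = T i (Sum.inr (k, -1)) ∧ -ε (ψ k (i + 1) x') = e) := by
  rw [← Equiv.symm_apply_eq, ← Equiv.symm_apply_eq, tileColour]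
  rcases (T i).symm (x' - x) with r' | ⟨k', s⟩
  · simp
  · rcases Int.units_eq_one_or s with rfl | rfl <;> simp <;> grind

end TileColour

section AffineCoord

variable {R : Type*} [Ring R]

/-- The affine coordinate on `R` with origin `q` and unit of length `u`. -/
def affineCoord (u : Rˣ) (q : R) : R ≃ R :=
  (Equiv.subRight q).trans u⁻¹.mulLeft

lemma affineCoord_apply (u : Rˣ) (q x : R) : affineCoord u q x = ↑u⁻¹ * (x - q) := rfl

lemma sub_eq_add_zsmul_iff_affineCoord {u : Rˣ} {q c x x' : R} {e : ℤ} :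
    x' - x = c + e • (u : R) ↔ affineCoord u (q + c) x' = affineCoord u q x + e := by
  have hdiff : affineCoord u (q + c) x' - (affineCoord u q x + e) =
      ↑u⁻¹ * (x' - x - (c + e • (u : R))) := by
    simp only [affineCoord_apply, zsmul_eq_mul, mul_sub, mul_add,
      (Int.cast_commute e (u : R)).eq, u.inv_mul_cancel_left]
    abel
  rw [← sub_eq_zero, ← u⁻¹.isUnit.mul_right_eq_zero, ← hdiff, sub_eq_zero]

end AffineCoord

section Tilings

variable {m n : ℕ} {ι κ : Type*} [Fintype ι] [Fintype κ] {w : κ → (ZMod n)ˣ}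

theorem hw_lexCycle_of_tilings [NeZero m] (hm : Odd m) (hn : Odd n) (h3 : 3 ≤ m) (hmn : m ≤ n)
    {p : ZMod m → ι ⊕ κ → ZMod n} (hsum : ∑ i, p i = 0)
    (hp : ∀ i, Function.Bijective (tile (fun k ↦ (w k : ZMod n)) (p i))) :
    HW (lexCycle m n) m n (Fintype.card ι) (Fintype.card κ * 2) := by
  have : NeZero n := ⟨by lia⟩
  obtain ⟨P, hP⟩ := exists_apply_add_one_eq_add_of_sum_eq_zero p hsum
  obtain ⟨ε, hε⟩ := exists_signs_sum_eq (Y := ZMod n) (m := m) (by rwa [ZMod.card])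
    (by rw [ZMod.card]; exact hn.add_odd hm)
  let T (i : ZMod m) := Equiv.ofBijective _ (hp i)
  let ψ (k : κ) (i : ZMod m) := affineCoord (w k) (P i (Sum.inr k))
  have step_iff (k i x x') (e : ℤˣ) :
      x' - x = T i (Sum.inr (k, e)) ↔ ψ k (i + 1) x' = ψ k i x + (e : ℤ) := by
    simp only [ψ, hP]
    exact sub_eq_add_zsmul_iff_affineCoord
  have hsingle (r : ι) : IsCycleFactor (lexCycle m n) (arcClass (tileColour ε T ψ) (Sum.inl r)) m :=
    isCycleFactor_arcClass_of_straight h3 (fun i ↦ Equiv.subRight (P i (Sum.inl r))) fun i x x' ↦ by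
      simp only [tileColour_eq_inl_iff, T, Equiv.ofBijective_apply, tile_inl, hP, Pi.add_apply,
        Equiv.subRight_apply]
      grind
  have hsign (e : ℤˣ) : ∑ y, (((e * ε y : ℤˣ) : ℤ) : ZMod m) = 0 := by
    have hcast : ∑ y, ((ε y : ℤ) : ZMod m) = 0 := by
      simpa using congrArg (Int.cast : ℤ → ZMod m) hε
    simp [← Finset.mul_sum, hcast]
  have sign_iff : ∀ e s : ℤˣ, (e * s = 1 ↔ s = e) ∧ (e * s = -1 ↔ -s = e) := by decide
  have hdomino (q : κ × ℤˣ) :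
      IsCycleFactor (lexCycle m n) (arcClass (tileColour ε T ψ) (Sum.inr q)) n :=
    isCycleFactor_arcClass_of_zigzag h3 (h3.trans hmn) (ψ q.1) (hsign q.2) fun i x x' ↦ by
      rw [tileColour_eq_inr_iff, step_iff, step_iff, (sign_iff _ _).1, (sign_iff _ _).2]
      simp [eq_add_neg_iff_add_eq, eq_comm (a := ψ q.1 i x)]
  simpa using hw_of_isDecomp hsingle hdomino (isDecomp_arcClass h3 _)

/-- The sequence `R 0, R 1, R 2, R 0, -R 0, R 0, -R 0, …`, whose initial segments of odd length at
least three all have the same sum. -/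
def extendRows {G : Type*} [AddCommGroup G] (R : Fin 3 → G) : ℕ → G
  | 0 => R 0
  | 1 => R 1
  | 2 => R 2
  | j + 3 => (-1 : ℤ) ^ j • R 0

lemma sum_range_extendRows {G : Type*} [AddCommGroup G] (R : Fin 3 → G) (t : ℕ) :
    ∑ j ∈ Finset.range (2 * t + 3), extendRows R j = ∑ s, R s := by
  induction t with
  | zero => simp [Finset.sum_range_succ, Fin.sum_univ_three, extendRows]
  | succ t ih =>
    rw [show 2 * (t + 1) + 3 = 2 * t + 3 + 1 + 1 by ring, Finset.sum_range_succ,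
      Finset.sum_range_succ, ih]
    simp [extendRows, pow_succ, pow_mul]

lemma extendRows_eq_or_eq_neg {G : Type*} [AddCommGroup G] (R : Fin 3 → G) :
    ∀ j, ∃ s, extendRows R j = R s ∨ extendRows R j = -R s
  | 0 => ⟨0, Or.inl rfl⟩
  | 1 => ⟨1, Or.inl rfl⟩
  | 2 => ⟨2, Or.inl rfl⟩
  | j + 3 => ⟨0, (neg_one_pow_eq_or ℤ j).imp (fun h ↦ by simp [extendRows, h])
      (fun h ↦ by simp [extendRows, h])⟩

theorem hw_lexCycle_of_three_tilings (hm : Odd m) (hn : Odd n) (h3 : 3 ≤ m) (hmn : m ≤ n)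
    {R : Fin 3 → ι ⊕ κ → ZMod n} (hsum : ∑ s, R s = 0)
    (hR : ∀ s, Function.Bijective (tile (fun k ↦ (w k : ZMod n)) (R s))) :
    HW (lexCycle m n) m n (Fintype.card ι) (Fintype.card κ * 2) := by
  have : NeZero m := ⟨by lia⟩
  obtain ⟨t, rfl⟩ : ∃ t, m = 2 * t + 3 := by
    obtain ⟨k, rfl⟩ := hm
    exact ⟨k - 1, by lia⟩
  refine hw_lexCycle_of_tilings (w := w) hm hn h3 hmn (p := fun i ↦ extendRows R i.val) ?_ ?_
  · rw [sum_zmod_val_eq_sum_range, sum_range_extendRows, hsum]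
  · intro i
    obtain ⟨s, h | h⟩ := extendRows_eq_or_eq_neg R i.val
    · rw [h]
      exact hR s
    · rw [h]
      exact bijective_tile_neg (hR s)

end Tilings

section Merge

variable {m n N N' : ℕ} {ι κ κ' : Type*}

/-- Three simultaneous tilings of the symmetric interval `{x | 2 * |x| < N}` by singletons and
dominoes `{c - 1, c + 1}` such that the three positions of each tile add up to zero. Only
injectivity is recorded; that the tiles fill the interval is a matter of counting them. -/
structure IsZeroSumTiling (N : ℕ) (p : Fin 3 → ι ⊕ κ → ℤ) : Prop where
  sum_eq_zero : ∑ s, p s = 0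
  injective (s : Fin 3) : Function.Injective (tile 1 (p s))
  two_mul_abs_lt (s : Fin 3) (z : ι ⊕ κ × ℤˣ) : 2 * |tile 1 (p s) z| < N

/-- The half-widths of the dominoes of `mergePos`. -/
def mergeWidth : κ ⊕ κ' → ℕ :=
  Sum.elim (fun _ ↦ 2) fun _ ↦ 1

/-- Doubling a tiling `p` gives even points; a singleton of `q` at `g` becomes the domino
`{4 * g - 1, 4 * g + 1}` of odd points. -/
def mergePos (p : ι ⊕ κ → ℤ) (q : κ' ⊕ Empty → ℤ) : ι ⊕ κ ⊕ κ' → ℤ :=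
  Sum.elim (fun r ↦ 2 * p (Sum.inl r))
    (Sum.elim (fun k ↦ 2 * p (Sum.inr k)) fun k ↦ 4 * q (Sum.inl k))

lemma tile_mergePos (p : ι ⊕ κ → ℤ) (q : κ' ⊕ Empty → ℤ) :
    ∃ e : (ι ⊕ κ × ℤˣ) ⊕ κ' × ℤˣ ≃ ι ⊕ (κ ⊕ κ') × ℤˣ,
      tile (fun k ↦ (mergeWidth k : ℤ)) (mergePos p q) ∘ e =
        Sum.elim (fun z ↦ 2 * tile 1 p z) fun a ↦ 4 * q (Sum.inl a.1) + a.2 := by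
  refine ⟨(Equiv.sumAssoc _ _ _).trans
    ((Equiv.refl ι).sumCongr (Equiv.sumProdDistrib κ κ' ℤˣ).symm), ?_⟩
  ext ((r | ⟨k, e⟩) | ⟨k, e⟩) <;> simp [tile, mergePos, mergeWidth, mul_add, mul_comm]

lemma sum_mergePos {p : Fin 3 → ι ⊕ κ → ℤ} {q : Fin 3 → κ' ⊕ Empty → ℤ}
    (hp : ∑ s, p s = 0) (hq : ∑ s, q s = 0) : ∑ s, mergePos (p s) (q s) = 0 := by
  have hpz (z) : ∑ s, p s z = 0 := by rw [← Finset.sum_apply, hp, Pi.zero_apply]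
  have hqz (z) : ∑ s, q s z = 0 := by rw [← Finset.sum_apply, hq, Pi.zero_apply]
  ext (r | k | k) <;> simp [mergePos, ← Finset.mul_sum, hpz, hqz]

lemma int_units_coe_eq_one_or (u : ℤˣ) : (u : ℤ) = 1 ∨ (u : ℤ) = -1 :=
  Int.isUnit_iff.1 u.isUnit

lemma tile_mergePos_injective {p : ι ⊕ κ → ℤ} {q : κ' ⊕ Empty → ℤ}
    (hp : Function.Injective (tile 1 p)) (hq : Function.Injective (tile 1 q)) :
    Function.Injective (tile (fun k ↦ (mergeWidth k : ℤ)) (mergePos p q)) := by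
  obtain ⟨e, he⟩ := tile_mergePos p q
  rw [← e.injective_comp, he]
  refine Function.Injective.sumElim (fun z z' h ↦ hp (by lia)) (fun ⟨k, u⟩ ⟨k', u'⟩ h ↦ ?_)
    fun z ⟨k, u⟩ ↦ ?_
  · have := int_units_coe_eq_one_or u
    have := int_units_coe_eq_one_or u'
    have hk : q (Sum.inl k) = q (Sum.inl k') := by lia
    exact Prod.ext (hq.comp Sum.inl_injective hk) (Units.ext (by lia))
  · have := int_units_coe_eq_one_or u
    lia

lemma tile_mergePos_mem {p : ι ⊕ κ → ℤ} {q : κ' ⊕ Empty → ℤ}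
    (hp : ∀ z, 2 * |tile 1 p z| < N) (hq : ∀ z, 2 * |tile 1 q z| < N') (z : ι ⊕ (κ ⊕ κ') × ℤˣ) :
    tile (fun k ↦ (mergeWidth k : ℤ)) (mergePos p q) z ∈
      {x : ℤ | Even x ∧ |x| < N ∨ Odd x ∧ |x| < 2 * N'} := by
  obtain ⟨e, he⟩ := tile_mergePos p q
  obtain ⟨z, rfl⟩ := e.surjective z
  rw [← Function.comp_apply (f := tile _ _), he]
  rcases z with z | ⟨k, u⟩
  · exact Or.inl ⟨even_two_mul _, by simpa [abs_mul] using hp z⟩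
  · have hqk : 2 * |q (Sum.inl k)| < N' := hq (Sum.inl k)
    have hu := int_units_coe_eq_one_or u
    rw [Sum.elim_inr, Set.mem_ofPred_eq, Int.odd_iff]
    grind

lemma injOn_intCast_zmod (hn : n = N + 2 * N') (hodd : Odd n) :
    Set.InjOn (Int.cast : ℤ → ZMod n) {x : ℤ | Even x ∧ |x| < N ∨ Odd x ∧ |x| < 2 * N'} := by
  intro x hx y hy h
  have hdvd := (ZMod.intCast_eq_intCast_iff_dvd_sub x y n).1 h
  have hcop : IsCoprime (2 : ℤ) n := Nat.isCoprime_iff_coprime.2 (Nat.coprime_two_left.2 hodd)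
  suffices y - x = 0 by lia
  simp only [Set.mem_ofPred_eq, Int.even_iff, Int.odd_iff, abs_lt] at hx hy
  by_cases heven : 2 ∣ y - x
  · exact Int.eq_zero_of_abs_lt_dvd (hcop.mul_dvd heven hdvd) (abs_lt.2 (by lia))
  · exact Int.eq_zero_of_abs_lt_dvd hdvd (abs_lt.2 (by lia))

theorem hw_lexCycle_of_isZeroSumTiling [Fintype ι] [Fintype κ] [Fintype κ'] (hm : Odd m)
    (hodd : Odd n) (h3 : 3 ≤ m) (hmn : m ≤ n)
    {p : Fin 3 → ι ⊕ κ → ℤ} {q : Fin 3 → κ' ⊕ Empty → ℤ}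
    (hp : IsZeroSumTiling N p) (hq : IsZeroSumTiling N' q) (hn : n = N + 2 * N')
    (hN : Fintype.card ι + 2 * Fintype.card κ = N) (hN' : Fintype.card κ' = N') :
    HW (lexCycle m n) m n (Fintype.card ι) (Fintype.card (κ ⊕ κ') * 2) := by
  have : NeZero n := ⟨by lia⟩
  have coprime_width : ∀ k : κ ⊕ κ', (mergeWidth k).Coprime n := by
    rintro (_ | _)
    exacts [Nat.coprime_two_left.2 hodd, n.coprime_one_left]
  refine hw_lexCycle_of_three_tilings hm hodd h3 hmn
    (w := fun k ↦ ZMod.unitOfCoprime _ (coprime_width k))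
    (R := fun s ↦ Int.castAddHom (ZMod n) ∘ mergePos (p s) (q s)) ?_ fun s ↦ ?_
  · ext z
    simpa using congrArg (Int.cast : ℤ → ZMod n)
      (congrFun (sum_mergePos hp.sum_eq_zero hq.sum_eq_zero) z)
  · have hinj : Function.Injective (Int.castAddHom (ZMod n) ∘ tile _ (mergePos (p s) (q s))) :=
      ((injOn_intCast_zmod hn hodd).injective_iff _ (Set.range_subset_iff.2
        (tile_mergePos_mem (hp.two_mul_abs_lt s) (hq.two_mul_abs_lt s)))).2
        (tile_mergePos_injective (hp.injective s) (hq.injective s))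
    rw [← map_tile] at hinj
    refine (Fintype.bijective_iff_injective_and_card _).2 ⟨?_, ?_⟩
    · simpa [Function.comp_def] using hinj
    · simp only [Fintype.card_sum, Fintype.card_prod, Fintype.card_units_int, ZMod.card]
      lia

end Merge

section CompleteMapping

variable {κ : Type*} {N : ℕ} {S : Fin 3 → Finset ℤ} {y : ℤ → ℤ}

/-- `y` maps `S 0` injectively into `S 1` and `x ↦ -(x + y x)` maps `S 0` injectively into `S 2`.
When the `S s` are all equal to a finite abelian group, these are its complete mappings. -/
structure IsCompleteMapping (S : Fin 3 → Finset ℤ) (y : ℤ → ℤ) : Prop where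
  mem : ∀ x ∈ S 0, y x ∈ S 1
  neg_add_mem : ∀ x ∈ S 0, -(x + y x) ∈ S 2
  injOn : Set.InjOn y (S 0)
  injOn_add : Set.InjOn (fun x ↦ x + y x) (S 0)

lemma isCompleteMapping_iff : IsCompleteMapping S y ↔
    (∀ x ∈ S 0, y x ∈ S 1 ∧ -(x + y x) ∈ S 2) ∧
      ∀ x ∈ S 0, ∀ x' ∈ S 0, y x = y x' ∨ x + y x = x' + y x' → x = x' :=
  ⟨fun h ↦ ⟨fun x hx ↦ ⟨h.mem x hx, h.neg_add_mem x hx⟩, fun _ hx _ hx' heq ↦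
    heq.elim (h.injOn hx hx') (h.injOn_add hx hx')⟩,
    fun h ↦ ⟨fun x hx ↦ (h.1 x hx).1, fun x hx ↦ (h.1 x hx).2,
      fun x hx x' hx' heq ↦ h.2 x hx x' hx' (Or.inl heq),
      fun x hx x' hx' heq ↦ h.2 x hx x' hx' (Or.inr heq)⟩⟩

/-- The three entries of the zero-sum triple `(x, y x, -(x + y x))`. -/
def zeroSumRow (y : ℤ → ℤ) : Fin 3 → ℤ → ℤ :=
  ![id, y, fun x ↦ -(x + y x)]

lemma sum_zeroSumRow (y : ℤ → ℤ) (x : ℤ) : ∑ s, zeroSumRow y s x = 0 := by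
  simp [zeroSumRow, Fin.sum_univ_three]

lemma IsCompleteMapping.zeroSumRow_mem (h : IsCompleteMapping S y) {x : ℤ} (hx : x ∈ S 0) :
    ∀ s, zeroSumRow y s x ∈ S s
  | 0 => hx
  | 1 => h.mem x hx
  | 2 => h.neg_add_mem x hx

lemma IsCompleteMapping.injOn_zeroSumRow (h : IsCompleteMapping S y) :
    ∀ s, Set.InjOn (zeroSumRow y s) (S 0)
  | 0 => Set.injOn_id _
  | 1 => h.injOn
  | 2 => neg_injective.comp_injOn h.injOn_add

lemma IsCompleteMapping.isZeroSumTiling {c : Fin 3 → κ → ℤ} (h : IsCompleteMapping S y)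
    (hS : ∀ s, ∀ x ∈ S s, 2 * |x| < N) (hsum : ∑ s, c s = 0)
    (hinj : ∀ s, Function.Injective fun q : κ × ℤˣ ↦ c s q.1 + q.2)
    (hc : ∀ s k (e : ℤˣ), 2 * |c s k + e| < N) (hdisj : ∀ s k (e : ℤˣ), c s k + e ∉ S s) :
    IsZeroSumTiling N fun s ↦ Sum.elim (fun x : S 0 ↦ zeroSumRow y s x) (c s) where
  sum_eq_zero := by
    ext (x | k)
    · simp [sum_zeroSumRow]
    · simpa using congrFun hsum k
  injective s := by
    refine ((h.injOn_zeroSumRow s).injective).sumElim ?_ fun x q heq ↦ ?_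
    · simpa using hinj s
    · have hmem := h.zeroSumRow_mem x.2 s
      rw [show zeroSumRow y s x = c s q.1 + q.2 by simpa using heq] at hmem
      exact hdisj s q.1 q.2 hmem
  two_mul_abs_lt s := by
    rintro (x | ⟨k, e⟩)
    · exact hS s _ (h.zeroSumRow_mem x.2 s)
    · simpa [tile] using hc s k e

end CompleteMapping

section Existence

lemma isCompleteMapping_Icc (b : ℤ) :
    IsCompleteMapping (fun _ ↦ Finset.Icc (-b) b) fun x ↦ if x ≤ 0 then x + b else x - b - 1 where
  mem x hx := by grind
  neg_add_mem x hx := by grind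
  injOn x hx x' hx' h := by grind
  injOn_add x _ x' _ h := by grind

lemma exists_isZeroSumTiling_singletons {N : ℕ} (hN : N = 0 ∨ Odd N) :
    ∃ (A : Finset ℤ) (p : Fin 3 → A ⊕ Empty → ℤ), A.card = N ∧ IsZeroSumTiling N p := by
  suffices ∃ (A : Finset ℤ) (y : ℤ → ℤ), A.card = N ∧ (∀ x ∈ A, 2 * |x| < N) ∧
      IsCompleteMapping (fun _ ↦ A) y by
    obtain ⟨A, y, hcard, hA, hy⟩ := this
    exact ⟨A, _, hcard, hy.isZeroSumTiling (fun _ ↦ hA) (c := fun _ ↦ Empty.elim)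
      (Subsingleton.elim _ _) (fun _ ↦ Function.injective_of_subsingleton _) nofun nofun⟩
  obtain rfl | ⟨b, rfl⟩ := hN
  · exact ⟨∅, id, rfl, by simp, by simp, by simp, by simp, by simp⟩
  · refine ⟨_, _, ?_, fun x hx ↦ ?_, isCompleteMapping_Icc b⟩
    · rw [Int.card_Icc]
      lia
    · have := abs_le.2 (Finset.mem_Icc.1 hx)
      lia

/-- The interval `[-K, K]` with the domino `{f - 1, f + 1}` removed. -/
noncomputable def puncturedIcc (K f : ℤ) : Finset ℤ :=
  Finset.Icc (-K) K \ {f - 1, f + 1}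

lemma mem_puncturedIcc {K f x : ℤ} :
    x ∈ puncturedIcc K f ↔ (-K ≤ x ∧ x ≤ K) ∧ x ≠ f - 1 ∧ x ≠ f + 1 := by
  simp [puncturedIcc]

lemma card_puncturedIcc {K f : ℤ} (hf : |f| < K) :
    ((puncturedIcc K f).card : ℤ) = 2 * K - 1 := by
  have hsub : {f - 1, f + 1} ⊆ Finset.Icc (-K) K := by grind
  have hcard := Finset.card_sdiff_add_card_eq_card hsub
  rw [Finset.card_pair (by lia), Int.card_Icc] at hcard
  rw [puncturedIcc]
  lia

lemma isCompleteMapping_puncturedIcc_two_mul_add_one {t : ℤ} (ht : 2 ≤ t) :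
    IsCompleteMapping (fun s ↦ puncturedIcc (2 * t + 1) (![t - 1, t + 1, -2 * t] s)) fun x ↦
      if x ≤ -t - 3 then x + 2 * t + 2 else
      if x ≤ -4 then x + 2 * t + 5 else
      if x ≤ t - 3 then x - 2 * t + 5 else
      if x = t - 1 then t + 1 else
      if x ≤ 2 * t - 2 then x + 2 - 2 * t else x - 4 * t where
  mem x hx := by
    simp only [mem_puncturedIcc, Matrix.cons_val] at *
    split_ifs <;> lia
  neg_add_mem x hx := by
    simp only [mem_puncturedIcc, Matrix.cons_val] at *
    split_ifs <;> lia
  injOn x hx x' hx' h := by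
    simp only [Finset.mem_coe, mem_puncturedIcc, Matrix.cons_val] at *
    split_ifs at h <;> lia
  injOn_add x hx x' hx' h := by
    simp only [Finset.mem_coe, mem_puncturedIcc, Matrix.cons_val] at *
    split_ifs at h <;> lia

lemma isCompleteMapping_puncturedIcc_two_mul {t : ℤ} (ht : 3 ≤ t) :
    IsCompleteMapping (fun s ↦ puncturedIcc (2 * t) (![t, t - 1, -2 * t + 1] s)) fun x ↦
      if x ≤ -2 * t + 2 then x + 4 * t - 2 else
      if x ≤ -t + 2 then x + 2 * t - 5 else
      if x ≤ -1 then x + 2 * t - 2 else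
      if x ≤ t - 2 then x - 2 * t else
      if x = t then t - 1 else x - 2 * t - 3 where
  mem x hx := by
    simp only [mem_puncturedIcc, Matrix.cons_val] at *
    split_ifs <;> lia
  neg_add_mem x hx := by
    simp only [mem_puncturedIcc, Matrix.cons_val] at *
    split_ifs <;> lia
  injOn x hx x' hx' h := by
    simp only [Finset.mem_coe, mem_puncturedIcc, Matrix.cons_val] at *
    split_ifs at h <;> lia
  injOn_add x hx x' hx' h := by
    simp only [Finset.mem_coe, mem_puncturedIcc, Matrix.cons_val] at *
    split_ifs at h <;> lia

lemma exists_isCompleteMapping_puncturedIcc_of_le_four {K : ℤ} (hK : 1 ≤ K) (hK4 : K ≤ 4) :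
    ∃ (f : Fin 3 → ℤ) (y : ℤ → ℤ), ∑ s, f s = 0 ∧ (∀ s, |f s| < K) ∧
      IsCompleteMapping (fun s ↦ puncturedIcc K (f s)) y := by
  obtain rfl | rfl | rfl | rfl : K = 1 ∨ K = 2 ∨ K = 3 ∨ K = 4 := by lia
  · exact ⟨0, 0, by decide, by decide, isCompleteMapping_iff.2 (by decide)⟩
  · exact ⟨0, fun x ↦ if x = 0 then 2 else if x = 2 then -2 else 0, by decide, by decide,
      isCompleteMapping_iff.2 (by decide)⟩
  · exact ⟨![1, -2, 1], fun x ↦ if x = -3 then 0 else if x = -2 then 1 else if x = -1 then 3 else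
      if x = 1 then 2 else -2, by decide, by decide, isCompleteMapping_iff.2 (by decide)⟩
  · exact ⟨![3, -1, -2], fun x ↦ if x = -4 then 1 else if x = -3 then -1 else if x = -2 then 2 else
      if x = -1 then 3 else if x = 0 then 4 else if x = 1 then -3 else -4, by decide, by decide,
      isCompleteMapping_iff.2 (by decide)⟩

lemma exists_isCompleteMapping_puncturedIcc {K : ℤ} (hK : 1 ≤ K) :
    ∃ (f : Fin 3 → ℤ) (y : ℤ → ℤ), ∑ s, f s = 0 ∧ (∀ s, |f s| < K) ∧
      IsCompleteMapping (fun s ↦ puncturedIcc K (f s)) y := by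
  obtain hK4 | hK4 := le_or_gt K 4
  · exact exists_isCompleteMapping_puncturedIcc_of_le_four hK hK4
  obtain ⟨t, rfl | rfl⟩ := K.even_or_odd'
  · refine ⟨_, _, ?_, ?_, isCompleteMapping_puncturedIcc_two_mul (by lia)⟩
    · simp only [Fin.sum_univ_three, Matrix.cons_val]
      ring
    · simp only [Fin.forall_fin_succ, Matrix.cons_val_zero, Matrix.cons_val_succ, abs_lt,
        IsEmpty.forall_iff]
      lia
  · refine ⟨_, _, ?_, ?_, isCompleteMapping_puncturedIcc_two_mul_add_one (by lia)⟩
    · simp only [Fin.sum_univ_three, Matrix.cons_val]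
      ring
    · simp only [Fin.forall_fin_succ, Matrix.cons_val_zero, Matrix.cons_val_succ, abs_lt,
        IsEmpty.forall_iff]
      lia

lemma exists_isZeroSumTiling_domino {N : ℕ} (hN : Odd N) (h3 : 3 ≤ N) :
    ∃ (A : Finset ℤ) (p : Fin 3 → A ⊕ Unit → ℤ), A.card + 2 = N ∧ IsZeroSumTiling N p := by
  obtain ⟨K, rfl⟩ := hN
  obtain ⟨f, y, hsum, hf, hy⟩ := exists_isCompleteMapping_puncturedIcc (K := K) (by lia)
  refine ⟨_, _, ?_, hy.isZeroSumTiling (c := fun s _ ↦ f s) (fun s x hx ↦ ?_) ?_ ?_ ?_ ?_⟩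
  · have := card_puncturedIcc (hf 0)
    lia
  · have := abs_le.2 (mem_puncturedIcc.1 hx).1
    lia
  · ext
    simpa using hsum
  · intro s q q' h
    exact Prod.ext rfl (Units.ext (by simpa using h))
  · intro s _ e
    have := abs_lt.1 (hf s)
    have := int_units_coe_eq_one_or e
    grind
  · intro s _ e hmem
    have := int_units_coe_eq_one_or e
    have := mem_puncturedIcc.1 hmem
    lia

end Existence

theorem hw_lexCycle_of_add_eq {m n α β : ℕ} (hm : Odd m) (hn : Odd n) (hα : Odd α) (h3 : 3 ≤ m)
    (hmn : m ≤ n) (hαβ : α + β = n) : HW (lexCycle m n) m n α β := by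
  obtain ⟨B, rfl⟩ : Even β := by grind
  by_cases hB : B = 0 ∨ Odd B
  · obtain ⟨A, p, hA, hp⟩ := exists_isZeroSumTiling_singletons (Or.inr hα)
    obtain ⟨A', q, hA', hq⟩ := exists_isZeroSumTiling_singletons hB
    have h := hw_lexCycle_of_isZeroSumTiling hm hn h3 hmn hp hq (by lia) (by simpa) (by simpa)
    convert h using 1 <;> simp only [Fintype.card_sum, Fintype.card_coe, Fintype.card_empty] <;> lia
  · obtain ⟨A, p, hA, hp⟩ := exists_isZeroSumTiling_domino (N := α + 2) (by grind) (by grind)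
    obtain ⟨A', q, hA', hq⟩ := exists_isZeroSumTiling_singletons (N := B - 1) (by grind)
    have h := hw_lexCycle_of_isZeroSumTiling hm hn h3 hmn hp hq (by lia) (by simpa using hA)
      (by simpa)
    convert h using 1 <;> simp only [Fintype.card_sum, Fintype.card_coe, Fintype.card_unit] <;> lia

theorem add_eq_of_hw_lexCycle {m n α β : ℕ} (h3 : 3 ≤ m) (h : HW (lexCycle m n) m n α β) :
    α + β = n := by
  have := h.ncard_neighborSet 0
  rw [ncard_neighborSet_lexCycle h3] at this
  lia

theorem stmt18 (m n α β : ℕ) (hm : Odd m) (hn : Odd n) (hα : Odd α)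
    (h3 : 3 ≤ m) (hmn : m ≤ n) (hαn : α ≤ n) :
    ((β = n - α ∧ ¬((α = 2 ∨ α = 4) ∨ (β = 1 ∨ β = 3))) →
      HW (lexCycle m n) m n α β) ∧
    (HW (lexCycle m n) m n α β → β = n - α) := by
  refine ⟨fun h ↦ hw_lexCycle_of_add_eq hm hn hα h3 hmn (by lia), fun h ↦ ?_⟩
  have := add_eq_of_hw_lexCycle h3 h
  lia
end
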